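/- Suppose F ⊆ ℤ² is finite and F ⊕ C = ℤ². If there exists a finite partition (C₁, …, C_m) of C such that each C_i is 1-periodic, then there exists a periodic set C' ⊆ ℤ² such that F ⊕ C' = ℤ². -/

import Mathlib

/-- `F ⊕ C = E` : every sum `f + c` (with `f ∈ F`, `c ∈ C`) lies in `E`, and every
element of `E` can be uniquely expressed as `f + c` with `f ∈ F` and `c ∈ C`. -/
def TileOplus (F C E : Set (ℤ × ℤ)) : Prop :=
  (∀ f ∈ F, ∀ c ∈ C, f + c ∈ E) ∧
    ∀ e ∈ E, ∃! p : (ℤ × ℤ) × (ℤ × ℤ), p.1 ∈ F ∧ p.2 ∈ C ∧ p.1 + p.2 = e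

/-- A set `E ⊆ ℤ²` is periodic if `E + Λ = E` for some finite index subgroup `Λ ⊆ ℤ²`. -/
def IsPeriodicSet (E : Set (ℤ × ℤ)) : Prop :=
  ∃ Λ : AddSubgroup (ℤ × ℤ), Λ.FiniteIndex ∧ ∀ h ∈ Λ, ∀ x : ℤ × ℤ, x + h ∈ E ↔ x ∈ E

/-- A set `E ⊆ ℤ²` is 1-periodic if `E + h = E` for some nonzero `h ∈ ℤ²`. -/
def IsOnePeriodicSet (E : Set (ℤ × ℤ)) : Prop :=
  ∃ h : ℤ × ℤ, h ≠ 0 ∧ ∀ x : ℤ × ℤ, x + h ∈ E ↔ x ∈ E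

/-!
Grouping the pieces of `C` by direction writes the indicator function of `C` as `∑ u_v`, where
`u_v` is integer valued and `v`-periodic and the directions `v` are pairwise nonparallel. The
convolutions `1_F * u_v` sum to the constant `1`. Differencing along all directions but `v` kills
every summand but the one for `v`, so iterated differences of `1_F * u_v` are periodic; since a
nonconstant arithmetic progression is unbounded, `1_F * u_v` itself is periodic.

By the pigeonhole principle there is a long strip parallel to `v` near whose two ends `u_v` looks
the same. Extending `u_v` periodically from such a strip, with a translation vector that is a
period of `1_F * u_v`, gives a periodic function `u_v'` with `1_F * u_v' = 1_F * u_v`. Hence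
`U = ∑ u_v'` is periodic and nonnegative with `1_F * U = 1`, which forces `U` to take only the
values `0` and `1` and makes it the indicator function of the required `C'`.
-/

open Function fwdDiff

section PeriodicFunctions

variable {G α β M : Type*} [AddCommGroup G] [AddCommGroup M]

/-- `f` is periodic with respect to a finite index subgroup; the analogue for functions of
`IsPeriodicSet`. -/
def IsPeriodicFun (f : G → α) : Prop :=
  ∃ Λ : AddSubgroup G, Λ.FiniteIndex ∧ ∀ h ∈ Λ, Periodic f h

namespace IsPeriodicFun

theorem comp {f : G → α} (hf : IsPeriodicFun f) (g : α → β) : IsPeriodicFun (g ∘ f) := by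
  obtain ⟨Λ, hΛ, hper⟩ := hf
  exact ⟨Λ, hΛ, fun h hh => (hper h hh).comp g⟩

theorem sum {ι : Type*} {S : Finset ι} {f : ι → G → M} (hf : ∀ i ∈ S, IsPeriodicFun (f i)) :
    IsPeriodicFun (∑ i ∈ S, f i) := by
  choose! Λ hΛ hper using hf
  refine ⟨⨅ i ∈ S, Λ i, AddSubgroup.finiteIndex_iInf' Λ hΛ, fun h hh => ?_⟩
  simp only [AddSubgroup.mem_iInf] at hh
  exact S.periodic_sum fun i hi => hper i hi h (hh i hi)

end IsPeriodicFun

theorem periodic_fwdDiff {f : G → M} {c : G} (hf : Periodic f c) (h : G) :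
    Periodic (Δ_[h] f) c := fun x => by
  simp only [fwdDiff, add_right_comm x c h, hf _]

theorem fwdDiff_eq_zero_iff_periodic {f : G → M} {h : G} : Δ_[h] f = 0 ↔ Periodic f h := by
  simp [funext_iff, fwdDiff, sub_eq_zero, Periodic]

namespace IsPeriodicFun

theorem fwdDiff {f : G → M} (hf : IsPeriodicFun f) (h : G) : IsPeriodicFun (Δ_[h] f) := by
  obtain ⟨Λ, hΛ, hper⟩ := hf
  exact ⟨Λ, hΛ, fun c hc => periodic_fwdDiff (hper c hc) h⟩

theorem exists_periodic_nsmul {f : G → α} (hf : IsPeriodicFun f) :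
    ∃ n : ℕ, n ≠ 0 ∧ ∀ x : G, Periodic f (n • x) := by
  obtain ⟨Λ, hΛ, hper⟩ := hf
  exact ⟨Λ.index, hΛ.index_ne_zero, fun x => hper _ (Λ.nsmul_index_mem x)⟩

theorem of_periodic_nsmul [AddGroup.FG G] {f : G → α} {n : ℕ} (hn : n ≠ 0)
    (h : ∀ x : G, Periodic f (n • x)) : IsPeriodicFun f := by
  refine ⟨_, AddSubgroup.finiteIndex_range_nsmulAddMonoidHom_of_fg G hn, ?_⟩
  rintro _ ⟨x, rfl⟩
  exact h x

end IsPeriodicFun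

theorem finite_range_fwdDiff {f : G → M} (hf : (Set.range f).Finite) (h : G) :
    (Set.range (Δ_[h] f)).Finite := by
  refine (hf.image2 (· - ·) hf).subset ?_
  rintro _ ⟨x, rfl⟩
  exact Set.mem_image2_of_mem ⟨x + h, rfl⟩ ⟨x, rfl⟩

theorem finite_range_finsetSum {ι : Type*} {S : Finset ι} {f : ι → α → M}
    (hf : ∀ i ∈ S, (Set.range (f i)).Finite) : (Set.range (∑ i ∈ S, f i)).Finite := by
  classical
  induction S using Finset.induction_on with
  | empty => exact (Set.finite_singleton 0).subset (by rintro _ ⟨x, rfl⟩; simp)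
  | insert i S hi ih =>
    rw [Finset.forall_mem_insert] at hf
    refine (hf.1.image2 (· + ·) (ih hf.2)).subset ?_
    rintro _ ⟨x, rfl⟩
    rw [Finset.sum_insert hi]
    exact Set.mem_image2_of_mem ⟨x, rfl⟩ ⟨x, rfl⟩

/-- Along `h` such a function is an arithmetic progression, and a nonconstant one takes infinitely
many values. -/
theorem periodic_of_periodic_fwdDiff [IsAddTorsionFree M] {f : G → M} {h : G}
    (hfin : (Set.range f).Finite) (hf : Periodic (Δ_[h] f) h) : Periodic f h := by
  intro x
  have progression (j : ℕ) : f (x + j • h) = f x + j • Δ_[h] f x := by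
    induction j with
    | zero => simp
    | succ j ih =>
      have hstep : Δ_[h] f (x + j • h) = Δ_[h] f x := hf.nsmul j x
      rw [succ_nsmul, succ_nsmul, ← add_assoc, ← add_assoc, ← ih, ← hstep, fwdDiff,
        add_sub_cancel]
  by_contra hne
  have hd : ¬IsOfFinAddOrder (Δ_[h] f x) :=
    not_isOfFinAddOrder_of_isAddTorsionFree (sub_ne_zero.2 hne)
  have hinj : Injective fun j : ℕ => f x + j • Δ_[h] f x :=
    (add_right_injective _).comp (injective_nsmul_iff_not_isOfFinAddOrder.2 hd)
  exact hfin.not_infinite <|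
    Set.infinite_of_injective_forall_mem hinj fun j => progression j ▸ Set.mem_range_self _

end PeriodicFunctions

section TranslateSum

variable {G M : Type*} [AddCommGroup G] [AddCommGroup M]

/-- The convolution of the indicator function of `F` with `f`. -/
def translateSum (F : Finset G) (f : G → M) : G → M := fun x => ∑ a ∈ F, f (x - a)

theorem translateSum_apply (F : Finset G) (f : G → M) (x : G) :
    translateSum F f x = ∑ a ∈ F, f (x - a) := rfl

theorem translateSum_finsetSum {ι : Type*} (F : Finset G) (S : Finset ι) (f : ι → G → M) :
    translateSum F (∑ i ∈ S, f i) = ∑ i ∈ S, translateSum F (f i) := by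
  ext x
  simp only [translateSum_apply, Finset.sum_apply]
  exact Finset.sum_comm

theorem periodic_translateSum {f : G → M} {c : G} (hf : Periodic f c) (F : Finset G) :
    Periodic (translateSum F f) c := fun x =>
  Finset.sum_congr rfl fun a _ => hf.sub_const a x

theorem finite_range_translateSum {f : G → M} (hf : (Set.range f).Finite) (F : Finset G) :
    (Set.range (translateSum F f)).Finite := by
  have hsum : translateSum F f = ∑ a ∈ F, fun x => f (x - a) := by
    ext x
    simp [translateSum_apply]
  rw [hsum]
  exact finite_range_finsetSum fun a _ => hf.subset (Set.range_comp_subset_range (· - a) f)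

end TranslateSum

section DetForm

/-- The determinant `det (v, w)` as a bilinear form: `v` and `w` are parallel if and only if it
vanishes. -/
def detForm : LinearMap.BilinForm ℤ (ℤ × ℤ) :=
  LinearMap.mk₂ ℤ (fun v w => v.1 * w.2 - v.2 * w.1)
    (fun _ _ _ => by simp; ring) (fun _ _ _ => by simp; ring)
    (fun _ _ _ => by simp; ring) (fun _ _ _ => by simp; ring)

theorem detForm_apply (v w : ℤ × ℤ) : detForm v w = v.1 * w.2 - v.2 * w.1 := rfl

@[simp]
theorem detForm_self (v : ℤ × ℤ) : detForm v v = 0 := by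
  rw [detForm_apply]
  ring

theorem detForm_smul_eq_add (v w x : ℤ × ℤ) :
    detForm v w • x = detForm x w • v + detForm v x • w := by
  ext <;> simp [detForm_apply] <;> ring

theorem exists_detForm_pos {v : ℤ × ℤ} (hv : v ≠ 0) : ∃ w, 0 < detForm v w := by
  refine ⟨(-v.2, v.1), ?_⟩
  have hv' : v.1 ≠ 0 ∨ v.2 ≠ 0 := by
    rwa [← not_and_or, ← Prod.mk_eq_zero]
  rw [detForm_apply]
  rcases hv' with h | h
  · nlinarith [mul_self_pos.2 h, mul_self_nonneg v.2]
  · nlinarith [mul_self_pos.2 h, mul_self_nonneg v.1]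

theorem exists_detForm_ne_zero {ι : Type*} [Finite ι] {h : ι → ℤ × ℤ} (h0 : ∀ i, h i ≠ 0) :
    ∃ w, ∀ i, detForm w (h i) ≠ 0 := by
  have hfin (i : ι) : {t : ℤ | detForm (1, t) (h i) = 0}.Finite := by
    refine Set.Subsingleton.finite fun s hs t ht => ?_
    simp only [Set.mem_ofPred_eq, detForm_apply] at hs ht
    by_contra hst
    have h1 : (h i).1 = 0 := by
      have : (s - t) * (h i).1 = 0 := by linear_combination ht - hs
      exact (mul_eq_zero.1 this).resolve_left (sub_ne_zero.2 hst)
    exact h0 i (Prod.ext h1 (by simpa [h1] using hs))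
  obtain ⟨t, ht⟩ := (Set.finite_iUnion hfin).exists_notMem
  exact ⟨(1, t), by simpa using ht⟩

/-- The multiples `k i • h i` are chosen with a common value of `detForm w`, for some `w` parallel
to no `h i`; parallel vectors with equal nonzero values of `detForm w` coincide. -/
theorem exists_smul_eq_of_detForm_eq_zero {ι : Type*} [Finite ι] {h : ι → ℤ × ℤ}
    (h0 : ∀ i, h i ≠ 0) :
    ∃ k : ι → ℤ, (∀ i, k i • h i ≠ 0) ∧
      ∀ i j, detForm (k i • h i) (k j • h j) = 0 → k i • h i = k j • h j := by
  classical
  cases nonempty_fintype ι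
  obtain ⟨w, hw⟩ := exists_detForm_ne_zero h0
  set L := ∏ i, detForm w (h i)
  have hL : L ≠ 0 := Finset.prod_ne_zero_iff.2 fun i _ => hw i
  let k (i : ι) : ℤ := ∏ j ∈ Finset.univ.erase i, detForm w (h j)
  have hk (i : ι) : detForm w (k i • h i) = L := by
    rw [map_smul, smul_eq_mul]
    exact Finset.prod_erase_mul _ _ (Finset.mem_univ i)
  refine ⟨k, fun i hi => hL ?_, fun i j hij => smul_right_injective _ hL ?_⟩
  · rw [← hk i, hi, map_zero]
  · have := detForm_smul_eq_add w (k j • h j) (k i • h i)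
    rwa [hij, hk, hk, zero_smul, zero_add] at this

end DetForm

section Rigidity

variable {α M : Type*} [AddCommGroup M] [IsAddTorsionFree M]

theorem isPeriodicFun_of_periodic_of_detForm_ne_zero {f : ℤ × ℤ → α} {v w : ℤ × ℤ}
    (hv : Periodic f v) (hw : Periodic f w) (hvw : detForm v w ≠ 0) : IsPeriodicFun f := by
  refine .of_periodic_nsmul (Int.natAbs_ne_zero.2 hvw) fun x => ?_
  have hx : Periodic f (detForm v w • x) := by
    rw [detForm_smul_eq_add]
    exact (hv.zsmul _).add_period (hw.zsmul _)
  rcases Int.natAbs_eq (detForm v w) with h | h <;> rw [h] at hx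
  · simpa using hx
  · simpa using hx.neg

theorem isPeriodicFun_of_isPeriodicFun_fwdDiff {f : ℤ × ℤ → M} {v w : ℤ × ℤ}
    (hfin : (Set.range f).Finite) (hv : Periodic f v) (hvw : detForm v w ≠ 0)
    (hf : IsPeriodicFun (Δ_[w] f)) : IsPeriodicFun f := by
  obtain ⟨n, hn, hper⟩ := hf.exists_periodic_nsmul
  have hcomm : Δ_[w] (Δ_[n • w] f) = 0 := by
    have : Δ_[n • w] (Δ_[w] f) = 0 := fwdDiff_eq_zero_iff_periodic.2 (hper w)
    rw [← this]
    ext x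
    simp only [fwdDiff, add_right_comm x w]
    abel
  have hnw : Periodic f (n • w) :=
    periodic_of_periodic_fwdDiff hfin ((fwdDiff_eq_zero_iff_periodic.1 hcomm).nsmul n)
  refine isPeriodicFun_of_periodic_of_detForm_ne_zero hv hnw ?_
  rw [map_nsmul]
  exact smul_ne_zero hn hvw

/-- Differencing along `p i` kills the summand `f i`. -/
theorem isPeriodicFun_of_isPeriodicFun_add_sum {ι : Type*} {S : Finset ι} {v : ℤ × ℤ}
    {p : ι → ℤ × ℤ} (hp : ∀ i ∈ S, detForm v (p i) ≠ 0) {f : ι → ℤ × ℤ → M}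
    (hf : ∀ i ∈ S, Periodic (f i) (p i)) {g : ℤ × ℤ → M} (hfin : (Set.range g).Finite)
    (hg : Periodic g v) (hsum : IsPeriodicFun (g + ∑ i ∈ S, f i)) : IsPeriodicFun g := by
  classical
  induction S using Finset.induction_on generalizing f g with
  | empty => simpa using hsum
  | insert i S hi ih =>
    rw [Finset.forall_mem_insert] at hp hf
    refine isPeriodicFun_of_isPeriodicFun_fwdDiff hfin hg hp.1 <|
      ih (f := fun j => Δ_[p i] (f j)) hp.2 (fun j hj => periodic_fwdDiff (hf.2 j hj) _)
        (finite_range_fwdDiff hfin _) (periodic_fwdDiff hg _) ?_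
    have hfi : Δ_[p i] (f i) = 0 := fwdDiff_eq_zero_iff_periodic.2 hf.1
    simpa only [fwdDiff_add, fwdDiff_finsetSum, Finset.sum_insert hi, hfi, zero_add] using
      hsum.fwdDiff (p i)

theorem isPeriodicFun_of_isPeriodicFun_sum {ι : Type*} {S : Finset ι} {p : ι → ℤ × ℤ}
    (hp : (S : Set ι).Pairwise fun i j => detForm (p i) (p j) ≠ 0) {f : ι → ℤ × ℤ → M}
    (hfin : ∀ i ∈ S, (Set.range (f i)).Finite) (hf : ∀ i ∈ S, Periodic (f i) (p i))
    (hsum : IsPeriodicFun (∑ i ∈ S, f i)) {i : ι} (hi : i ∈ S) : IsPeriodicFun (f i) := by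
  classical
  refine isPeriodicFun_of_isPeriodicFun_add_sum (S := S.erase i) (p := p) (f := f) ?_ ?_
    (hfin i hi) (hf i hi) (by rwa [Finset.add_sum_erase S f hi])
  · intro j hj
    exact hp hi (Finset.mem_of_mem_erase hj) (Finset.ne_of_mem_erase hj).symm
  · exact fun j hj => hf j (Finset.mem_of_mem_erase hj)

end Rigidity

section StripExtension

variable {G α : Type*} [AddCommGroup G] {ℓ : G →ₗ[ℤ] ℤ} {z : G}

theorem eq_of_periodic_of_eqOn_strip (hz : 0 < ℓ z) {f g : G → α} (hf : Periodic f z)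
    (hg : Periodic g z) (b : ℤ) (hfg : ∀ x, ℓ x ∈ Set.Ico b (b + ℓ z) → f x = g x) : f = g := by
  ext x
  obtain ⟨j, hj, -⟩ := existsUnique_sub_zsmul_mem_Ico hz (ℓ x) b
  rw [← hf.sub_zsmul_eq j, ← hg.sub_zsmul_eq j]
  exact hfg _ (by rwa [map_sub, map_smul])

variable (hz : 0 < ℓ z)

/-- The `z`-periodic extension of the restriction of `f` to the strip `c ≤ ℓ < c + ℓ z`. -/
noncomputable def stripExtension (c : ℤ) (f : G → α) : G → α :=
  fun x => f (x - toIcoDiv hz c (ℓ x) • z)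

variable (c : ℤ) {f : G → α}

theorem range_stripExtension_subset : Set.range (stripExtension hz c f) ⊆ Set.range f := by
  rintro _ ⟨x, rfl⟩
  exact ⟨_, rfl⟩

theorem periodic_stripExtension : Periodic (stripExtension hz c f) z := fun x => by
  rw [stripExtension, stripExtension, map_add, toIcoDiv_add_right, add_smul, one_smul,
    add_sub_add_right_eq_sub]

theorem periodic_stripExtension_of_map_eq_zero {v : G} (hv : ℓ v = 0) (hf : Periodic f v) :
    Periodic (stripExtension hz c f) v := fun x => by
  rw [stripExtension, stripExtension, map_add, hv, add_zero, add_sub_right_comm, hf]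

variable {c}

theorem stripExtension_of_mem_strip {x : G} (hx : ℓ x ∈ Set.Ico c (c + ℓ z)) :
    stripExtension hz c f x = f x := by
  have : toIcoDiv hz c (ℓ x) = 0 := toIcoDiv_eq_of_sub_zsmul_mem_Ico hz (by simpa using hx)
  rw [stripExtension, this, zero_smul, sub_zero]

theorem stripExtension_of_overlap {W : ℤ} (hW : W ≤ ℓ z)
    (hf : ∀ x, ℓ x ∈ Set.Ico c (c + W) → f (x + z) = f x) {x : G}
    (hx : ℓ x ∈ Set.Ico c (c + ℓ z + W)) : stripExtension hz c f x = f x := by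
  rcases lt_or_ge (ℓ x) (c + ℓ z) with hlt | hge
  · exact stripExtension_of_mem_strip hz ⟨hx.1, hlt⟩
  · have hxz : ℓ (x - z) ∈ Set.Ico c (c + W) := by
      rw [map_sub]
      exact ⟨by linarith, by linarith [hx.2]⟩
    rw [← (periodic_stripExtension hz c).sub_eq,
      stripExtension_of_mem_strip hz ⟨hxz.1, by linarith [hxz.2]⟩, ← hf _ hxz, sub_add_cancel]

end StripExtension

section Replacement

variable {α β M : Type*} [AddCommGroup M] {v : ℤ × ℤ}

theorem exists_finite_strip_representatives (hv : v ≠ 0) (a b : ℤ) :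
    ∃ T : Set (ℤ × ℤ), T.Finite ∧ ∀ x, detForm v x ∈ Set.Ico a b → ∃ k : ℤ, x - k • v ∈ T := by
  obtain ⟨w, hw⟩ := exists_detForm_pos hv
  refine ⟨{x | detForm v x ∈ Set.Ico a b ∧ detForm x w ∈ Set.Ico 0 (0 + detForm v w)}, ?_,
    fun x hx => ?_⟩
  · refine Set.Finite.of_finite_image (f := fun x => (detForm v x, detForm x w))
      (((Set.finite_Ico _ _).prod (Set.finite_Ico _ _)).subset (Set.image_subset_iff.2 fun _ => id))
      fun x _ y _ hxy => smul_right_injective _ hw.ne' ?_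
    rw [Prod.mk.injEq] at hxy
    simp only [detForm_smul_eq_add v w, hxy.1, hxy.2]
  · obtain ⟨k, hk, -⟩ := existsUnique_sub_zsmul_mem_Ico hw (detForm x w) 0
    refine ⟨k, ?_, ?_⟩
    · rwa [map_sub, map_smul, detForm_self, smul_zero, sub_zero]
    · rwa [map_sub, LinearMap.sub_apply, map_smul, LinearMap.smul_apply]

/-- Up to translation by `v` the strip is finite, so `f` restricts to only finitely many patterns
on the translates of the strip. -/
theorem exists_translates_eqOn_strip (hv : v ≠ 0) {f : ℤ × ℤ → α} (hfin : (Set.range f).Finite)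
    (hf : Periodic f v) (p : ℤ × ℤ) (W : ℤ) :
    ∃ k d : ℕ, 0 < d ∧
      ∀ x, detForm v x ∈ Set.Ico 0 W → f (x + k • p + d • p) = f (x + k • p) := by
  obtain ⟨T, hT, hrep⟩ := exists_finite_strip_representatives hv 0 W
  have := hT.to_subtype
  have hpatterns : {φ : T → α | ∀ x, φ x ∈ Set.range f}.Finite := Set.Finite.pi' fun _ => hfin
  have hmem (k : ℕ) : (fun x : T => f (x + k • p)) ∈ {φ : T → α | ∀ x, φ x ∈ Set.range f} :=
    fun x => Set.mem_range_self _
  obtain ⟨k, l, hkl, hpattern⟩ := hpatterns.exists_lt_map_eq_of_forall_mem hmem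
  refine ⟨k, l - k, Nat.sub_pos_of_lt hkl, fun x hx => ?_⟩
  obtain ⟨j, hj⟩ := hrep x hx
  have key := congrFun hpattern ⟨_, hj⟩
  simp only [sub_add_eq_add_sub, hf.sub_zsmul_eq] at key
  rw [add_assoc, ← add_smul, Nat.add_sub_cancel' hkl.le, key]

theorem exists_translate_eqOn_strip_of_isPeriodicFun (hv : v ≠ 0) {f : ℤ × ℤ → α}
    (hfin : (Set.range f).Finite) (hf : Periodic f v) {g : ℤ × ℤ → β} (hg : IsPeriodicFun g)
    {W : ℤ} (hW : 0 ≤ W) :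
    ∃ (z : ℤ × ℤ) (c : ℤ), W < detForm v z ∧ Periodic g z ∧
      ∀ x, detForm v x ∈ Set.Ico c (c + W) → f (x + z) = f x := by
  obtain ⟨n, hn, hper⟩ := hg.exists_periodic_nsmul
  obtain ⟨w, hw⟩ := exists_detForm_pos hv
  set p := n • (W + 1) • w with hp
  obtain ⟨k, d, hd, hoverlap⟩ := exists_translates_eqOn_strip hv hfin hf p W
  refine ⟨d • p, detForm v (k • p), ?_, (hper _).nsmul d, fun x hx => ?_⟩
  · have hnd : (1 : ℤ) ≤ d * n := by exact_mod_cast Nat.mul_pos hd (Nat.pos_of_ne_zero hn)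
    rw [hp, map_nsmul, map_nsmul, map_smul, nsmul_eq_mul, nsmul_eq_mul, smul_eq_mul]
    calc W < W + 1 := lt_add_one W
      _ ≤ (W + 1) * detForm v w := le_mul_of_one_le_right (by lia) hw
      _ ≤ d * n * ((W + 1) * detForm v w) := le_mul_of_one_le_left (by positivity) hnd
      _ = d * (n * ((W + 1) * detForm v w)) := mul_assoc _ _ _
  · have hxk : detForm v (x - k • p) ∈ Set.Ico 0 W := by
      rw [map_sub]
      exact ⟨by linarith [hx.1], by linarith [hx.2]⟩
    simpa only [sub_add_cancel] using hoverlap _ hxk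

/-- `f'` is the periodic extension of the restriction of `f` to a long strip parallel to `v`, whose
two ends are chosen so that `f` looks the same near both. -/
theorem exists_isPeriodicFun_translateSum_eq (F : Finset (ℤ × ℤ)) (hv : v ≠ 0) {f : ℤ × ℤ → M}
    (hfin : (Set.range f).Finite) (hf : Periodic f v) (hFf : IsPeriodicFun (translateSum F f)) :
    ∃ f' : ℤ × ℤ → M, IsPeriodicFun f' ∧ Set.range f' ⊆ Set.range f ∧
      translateSum F f' = translateSum F f := by
  set B : ℤ := ∑ a ∈ F, |detForm v a|
  have hB {a : ℤ × ℤ} (ha : a ∈ F) : |detForm v a| ≤ B :=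
    Finset.single_le_sum (f := fun a => |detForm v a|) (fun _ _ => abs_nonneg _) ha
  have hB0 : 0 ≤ B := Finset.sum_nonneg fun _ _ => abs_nonneg _
  obtain ⟨z, c, hWz, hFz, hoverlap⟩ :=
    exists_translate_eqOn_strip_of_isPeriodicFun hv hfin hf hFf (W := 2 * B) (by lia)
  have hz : 0 < detForm v z := by lia
  have hf'z := periodic_stripExtension hz c (f := f)
  have hf'v := periodic_stripExtension_of_map_eq_zero hz c (detForm_self v) hf
  refine ⟨stripExtension hz c f, isPeriodicFun_of_periodic_of_detForm_ne_zero hf'v hf'z hz.ne',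
    range_stripExtension_subset hz c, ?_⟩
  refine eq_of_periodic_of_eqOn_strip hz (periodic_translateSum hf'z F) hFz (c + B) fun x hx =>
    Finset.sum_congr rfl fun a ha => stripExtension_of_overlap hz hWz.le hoverlap ?_
  have ⟨hal, hau⟩ := abs_le.1 (hB ha)
  rw [map_sub]
  exact ⟨by linarith [hx.1], by linarith [hx.2]⟩

end Replacement

section WeaklyPeriodic

variable {M : Type*} [AddCommGroup M]

theorem exists_nonzero_periods {ι α : Type*} [Finite ι] {g : ι → ℤ × ℤ → α}
    (hg : ∀ i, ∃ h ≠ 0, Periodic (g i) h) :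
    ∃ p : ι → ℤ × ℤ, (∀ i, p i ≠ 0 ∧ Periodic (g i) (p i)) ∧
      ∀ i j, detForm (p i) (p j) = 0 → p i = p j := by
  choose h h0 hper using hg
  obtain ⟨k, hk0, hk⟩ := exists_smul_eq_of_detForm_eq_zero h0
  exact ⟨fun i => k i • h i, fun i => ⟨hk0 i, (hper i).zsmul (k i)⟩, hk⟩

theorem exists_isPeriodicFun_translateSum_sum_eq [IsAddTorsionFree M] {ι : Type*} [Fintype ι]
    (F : Finset (ℤ × ℤ)) (K : AddSubmonoid M) {g : ι → ℤ × ℤ → M} (hK : ∀ i x, g i x ∈ K)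
    (hfin : ∀ i, (Set.range (g i)).Finite) (hg : ∀ i, ∃ h ≠ 0, Periodic (g i) h)
    (hper : IsPeriodicFun (translateSum F (∑ i, g i))) :
    ∃ g' : ℤ × ℤ → M, IsPeriodicFun g' ∧ (∀ x, g' x ∈ K) ∧
      translateSum F g' = translateSum F (∑ i, g i) := by
  classical
  obtain ⟨p, hp, hparallel⟩ := exists_nonzero_periods hg
  let S : Finset (ℤ × ℤ) := Finset.univ.image p
  let u (v : ℤ × ℤ) : ℤ × ℤ → M := ∑ i with p i = v, g i
  have hsum : ∑ v ∈ S, u v = ∑ i, g i :=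
    Finset.sum_fiberwise_of_maps_to (fun i _ => Finset.mem_image_of_mem p (Finset.mem_univ i)) g
  have hufin (v : ℤ × ℤ) : (Set.range (u v)).Finite := finite_range_finsetSum fun i _ => hfin i
  have hu (v : ℤ × ℤ) : Periodic (u v) v :=
    Finset.periodic_sum _ fun i hi => (Finset.mem_filter.1 hi).2 ▸ (hp i).2
  have hS : (S : Set (ℤ × ℤ)).Pairwise fun v w => detForm v w ≠ 0 := by
    simp only [S, Finset.coe_image, Finset.coe_univ, Set.image_univ]
    rintro _ ⟨i, rfl⟩ _ ⟨j, rfl⟩ hij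
    exact mt (hparallel i j) hij
  rw [← hsum, translateSum_finsetSum] at hper ⊢
  have hFu {v : ℤ × ℤ} (hv : v ∈ S) : IsPeriodicFun (translateSum F (u v)) :=
    isPeriodicFun_of_isPeriodicFun_sum (p := id) hS
      (fun v _ => finite_range_translateSum (hufin v) F)
      (fun v _ => periodic_translateSum (hu v) F) hper hv
  have hreplace (v : ℤ × ℤ) (hv : v ∈ S) : ∃ u' : ℤ × ℤ → M, IsPeriodicFun u' ∧
      Set.range u' ⊆ Set.range (u v) ∧ translateSum F u' = translateSum F (u v) := by
    obtain ⟨i, -, rfl⟩ := Finset.mem_image.1 hv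
    exact exists_isPeriodicFun_translateSum_eq F (hp i).1 (hufin _) (hu _) (hFu hv)
  choose! u' hu'per hu'range hu'sum using hreplace
  refine ⟨∑ v ∈ S, u' v, .sum hu'per, fun x => ?_, ?_⟩
  · rw [Finset.sum_apply]
    refine sum_mem fun v hv => ?_
    obtain ⟨y, hy⟩ := hu'range v hv ⟨x, rfl⟩
    simp only [← hy, u, Finset.sum_apply]
    exact sum_mem fun i _ => hK i y
  · rw [translateSum_finsetSum]
    exact Finset.sum_congr rfl hu'sum

end WeaklyPeriodic

section Tilings

theorem isPeriodicSet_iff {E : Set (ℤ × ℤ)} : IsPeriodicSet E ↔ IsPeriodicFun (· ∈ E) := by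
  simp [IsPeriodicSet, IsPeriodicFun, Periodic]

variable {G : Type*} [AddCommGroup G]

open Classical in
theorem translateSum_indicator_one (F : Finset G) (C : Set G) (x : G) :
    translateSum F (C.indicator (1 : G → ℤ)) x = (F.filter (x - · ∈ C)).card := by
  simp [translateSum_apply, Set.indicator_apply]

theorem existsUnique_add_eq_iff {F C : Set G} {x : G} :
    (∃! p : G × G, p.1 ∈ F ∧ p.2 ∈ C ∧ p.1 + p.2 = x) ↔ ∃! a, a ∈ F ∧ x - a ∈ C := by
  constructor
  · rintro ⟨⟨a, c⟩, ⟨ha, hc, rfl⟩, huniq⟩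
    refine ⟨a, ⟨ha, by simpa using hc⟩, fun b hb => ?_⟩
    exact congrArg Prod.fst (huniq (b, a + c - b) ⟨hb.1, hb.2, by simp⟩)
  · rintro ⟨a, ⟨ha, hc⟩, huniq⟩
    refine ⟨(a, x - a), ⟨ha, hc, by simp⟩, ?_⟩
    rintro ⟨b, c⟩ ⟨hb, hc', rfl⟩
    obtain rfl := huniq b ⟨hb, by simpa using hc'⟩
    simp

theorem tileOplus_iff_translateSum_indicator {F : Finset (ℤ × ℤ)} {C E : Set (ℤ × ℤ)} :
    TileOplus F C E ↔
      translateSum F (C.indicator (1 : ℤ × ℤ → ℤ)) = E.indicator (1 : ℤ × ℤ → ℤ) := by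
  classical
  have hout : (∀ f ∈ (F : Set (ℤ × ℤ)), ∀ c ∈ C, f + c ∈ E) ↔
      ∀ x ∉ E, (F.filter (x - · ∈ C)).card = 0 := by
    simp only [Finset.card_eq_zero, Finset.filter_eq_empty_iff]
    refine ⟨fun h x hx a ha hc => hx (by simpa using h a ha _ hc), fun h a ha c hc => ?_⟩
    by_contra hx
    exact h _ hx ha (by simpa using hc)
  have hin (x : ℤ × ℤ) : (∃! p : (ℤ × ℤ) × (ℤ × ℤ), p.1 ∈ (F : Set (ℤ × ℤ)) ∧ p.2 ∈ C ∧
      p.1 + p.2 = x) ↔ (F.filter (x - · ∈ C)).card = 1 := by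
    rw [existsUnique_add_eq_iff, Finset.card_eq_one_iff_existsUnique]
    simp
  simp only [TileOplus, hout, hin, funext_iff, translateSum_indicator_one, Set.indicator_apply,
    Pi.one_apply]
  refine ⟨fun h x => ?_, fun h => ⟨fun x hx => ?_, fun x hx => ?_⟩⟩
  · split_ifs with hx
    · exact_mod_cast h.2 x hx
    · exact_mod_cast h.1 x hx
  · simpa [hx] using h x
  · simpa [hx] using h x

theorem tileOplus_of_translateSum_eq {F : Finset (ℤ × ℤ)} {E : Set (ℤ × ℤ)} {f : ℤ × ℤ → ℤ}
    (hf : ∀ x, 0 ≤ f x) (hFf : translateSum F f = E.indicator (1 : ℤ × ℤ → ℤ)) :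
    TileOplus F {x | f x = 1} E := by
  rw [tileOplus_iff_translateSum_indicator, ← hFf]
  ext x
  refine Finset.sum_congr rfl fun a ha => ?_
  have hle : f (x - a) ≤ 1 := calc
    f (x - a) ≤ translateSum F f x :=
      Finset.single_le_sum (f := fun a => f (x - a)) (fun _ _ => hf _) ha
    _ = E.indicator (1 : ℤ × ℤ → ℤ) x := by rw [hFf]
    _ ≤ 1 := Set.indicator_le_self' (fun _ _ => zero_le_one) x
  have hnonneg := hf (x - a)
  simp only [Set.indicator_apply, Set.mem_ofPred_eq, Pi.one_apply]
  split_ifs <;> lia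

theorem finite_range_indicator_one {α : Type*} (C : Set α) :
    (Set.range (C.indicator (1 : α → ℤ))).Finite :=
  (Set.toFinite {0, 1}).subset (by
    rintro _ ⟨x, rfl⟩
    by_cases hx : x ∈ C <;> simp [hx])

theorem periodic_indicator_one {C : Set G} {h : G} (hC : ∀ x, x + h ∈ C ↔ x ∈ C) :
    Periodic (C.indicator (1 : G → ℤ)) h := fun x => by
  classical
  simp [Set.indicator_apply, hC]

theorem isPeriodicFun_indicator_one {E : Set (ℤ × ℤ)} (hE : IsPeriodicSet E) :
    IsPeriodicFun (E.indicator (1 : ℤ × ℤ → ℤ)) := by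
  obtain ⟨Λ, hΛ, hper⟩ := hE
  exact ⟨Λ, hΛ, fun h hh => periodic_indicator_one (hper h hh)⟩

theorem indicator_iUnion_eq_sum {ι α M : Type*} [Fintype ι] [AddCommMonoid M] {s : ι → Set α}
    (hs : Pairwise (Disjoint on s)) (f : α → M) :
    (⋃ i, s i).indicator f = ∑ i, (s i).indicator f := by
  ext x
  simpa using Finset.indicator_biUnion_apply Finset.univ s (f := f) (fun i _ j _ hij => hs hij) x

theorem periodic_tiling_of_weaklyPeriodic_tiling_general {ι : Type*} [Finite ι]
    (F C E : Set (ℤ × ℤ)) (hF : F.Finite) (hE : IsPeriodicSet E) (hFC : TileOplus F C E)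
    (Cs : ι → Set (ℤ × ℤ)) (hdisj : ∀ i j, i ≠ j → Disjoint (Cs i) (Cs j))
    (hcov : (⋃ i, Cs i) = C) (h1p : ∀ i, IsOnePeriodicSet (Cs i)) :
    ∃ C' : Set (ℤ × ℤ), IsPeriodicSet C' ∧ TileOplus F C' E := by
  cases nonempty_fintype ι
  lift F to Finset (ℤ × ℤ) using hF
  let χ (i : ι) : ℤ × ℤ → ℤ := (Cs i).indicator 1
  have hFχ : translateSum F (∑ i, χ i) = E.indicator 1 := by
    rwa [tileOplus_iff_translateSum_indicator, ← hcov,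
      indicator_iUnion_eq_sum fun i j => hdisj i j] at hFC
  have hχ0 (i : ι) (x : ℤ × ℤ) : χ i x ∈ AddSubmonoid.nonneg ℤ :=
    AddSubmonoid.mem_nonneg.2 (Set.indicator_nonneg (fun _ _ => zero_le_one) x)
  have hχper (i : ι) : ∃ h ≠ 0, Periodic (χ i) h :=
    (h1p i).imp fun h hh => ⟨hh.1, periodic_indicator_one hh.2⟩
  obtain ⟨f, hfper, hf0, hFf⟩ := exists_isPeriodicFun_translateSum_sum_eq F _ hχ0
    (fun i => finite_range_indicator_one (Cs i)) hχper (hFχ ▸ isPeriodicFun_indicator_one hE)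
  exact ⟨{x | f x = 1}, isPeriodicSet_iff.2 (hfper.comp (· = 1)),
    tileOplus_of_translateSum_eq (fun x => AddSubmonoid.mem_nonneg.1 (hf0 x)) (hFf.trans hFχ)⟩

end Tilings

/-- If `F ⊆ ℤ²` is finite, `F ⊕ C = ℤ²`, and `C` admits a finite partition
`(C₁, …, C_m)` into 1-periodic sets, then there is a periodic set `C' ⊆ ℤ²` with
`F ⊕ C' = ℤ²`. -/
theorem periodic_tiling_of_weaklyPeriodic_tiling (F C : Set (ℤ × ℤ)) (hF : F.Finite)
    (hFC : TileOplus F C Set.univ)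
    (m : ℕ) (Cs : Fin m → Set (ℤ × ℤ))
    (hdisj : ∀ i j, i ≠ j → Disjoint (Cs i) (Cs j))
    (hcov : (⋃ i, Cs i) = C)
    (h1p : ∀ i, IsOnePeriodicSet (Cs i)) :
    ∃ C' : Set (ℤ × ℤ), IsPeriodicSet C' ∧ TileOplus F C' Set.univ :=
  have hE : IsPeriodicSet Set.univ := ⟨⊤, inferInstance, by simp⟩
  periodic_tiling_of_weaklyPeriodic_tiling_general F C Set.univ hF hE hFC Cs hdisj hcov h1p
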